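/- For every m, k ≥ 1 and every finite coloring of FIN_{≤k}^[m] (the union of FIN_j^[m] for j = 1,…,k), there exists an infinite block sequence (b_n) in FIN_k such that TS_j(b_n)^[m] is monochromatic for every j = 1,2,…,k. -/

import Mathlib

/-- `FIN k`: finitely supported functions `ℕ → {0,…,k}` attaining the maximum value `k`. -/
def FIN (k : ℕ) : Set (ℕ → ℕ) :=
  {b | (∀ n, b n ≤ k) ∧ {n | b n ≠ 0}.Finite ∧ ∃ n, b n = k}

/-- `Supp b < Supp b'`. -/
def SuppLT (b b' : ℕ → ℕ) : Prop :=
  ∀ m, b m ≠ 0 → ∀ m', b' m' ≠ 0 → m < m'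

/-- `f` is (the extension to `ℕ` of) a nondecreasing surjection `{0,…,k} → {0,…,j}`. -/
def IsTetrisFn (k j : ℕ) (f : ℕ → ℕ) : Prop :=
  (∀ i i', i' ≤ i → i ≤ k → f i' ≤ f i) ∧ (∀ i, i ≤ k → f i ≤ j) ∧
    ∀ m, m ≤ j → ∃ i, i ≤ k ∧ f i = m

/-- An infinite block sequence in `FIN k`. -/
def IsBlockSeq (k : ℕ) (b : ℕ → ℕ → ℕ) : Prop :=
  (∀ n, b n ∈ FIN k) ∧ ∀ n, SuppLT (b n) (b (n + 1))

/-- An element of `FIN_k^[m]`: a block sequence in `FIN k` of length `m`. -/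
def IsBlockTuple (k m : ℕ) (t : Fin m → ℕ → ℕ) : Prop :=
  (∀ d, t d ∈ FIN k) ∧
    ∀ (d : ℕ) (h : d + 1 < m), SuppLT (t ⟨d, Nat.lt_of_succ_lt h⟩) (t ⟨d + 1, h⟩)

/-- The set `TS_j(b_n)^[m]`: all `(a_0,…,a_{m-1}) ∈ FIN_j^[m]` such that for some
`0 = n_0 < n_1 < ⋯ < n_m`, `j_i ∈ {0,…,k}` and nondecreasing surjections
`f_i : {0,…,k} → {0,…,j_i}` one has `a_d = f_{n_d}∘b_{n_d} + ⋯ + f_{n_{d+1}-1}∘b_{n_{d+1}-1}`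
and `max {j_{n_d},…,j_{n_{d+1}-1}} = j` for every `d < m`. -/
def TSm (k j m : ℕ) (b : ℕ → ℕ → ℕ) : Set (Fin m → ℕ → ℕ) :=
  {a | IsBlockTuple j m a ∧ ∃ (n : ℕ → ℕ) (js : ℕ → ℕ) (fs : ℕ → ℕ → ℕ),
    n 0 = 0 ∧ (∀ d, d < m → n d < n (d + 1)) ∧
    (∀ i, i < n m → js i ≤ k ∧ IsTetrisFn k (js i) (fs i)) ∧
    ∀ d : Fin m,
      (∀ i, n d.val ≤ i → i < n (d.val + 1) → js i ≤ j) ∧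
      (∃ i, n d.val ≤ i ∧ i < n (d.val + 1) ∧ js i = j) ∧
      a d = ∑ i ∈ Finset.Ico (n d.val) (n (d.val + 1)), (fs i) ∘ (b i)}

/-!
Functions `ℕ → ℕ` form a semigroup under pointwise maximum, which is addition when the supports are
disjoint and is preserved by every tetris function. In the compact right topological semigroup of
ultrafilters on them there are `u j`, for `j : ℕ`, such that `u j` contains `FIN j` and all sets
`{b | n ≤ min Supp b}`, every tetris operation from level `k` onto level `j` sends `u k` to `u j`,
and `u i * u j = u (max i j)`.

To find them, call a family `(v j)` coherent if it is compatible with all tetris operations; the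
images of a nonprincipal ultrafilter under `n ↦ j · 1_{n}` are an example. If `v` is coherent and
every `v j` is idempotent, then `v j * ⋯ * v 0` and `v 0 * ⋯ * v j` are coherent families as well,
because a tetris function maps consecutive levels to equal or consecutive levels. Hence the usual
construction, one level at a time, of an idempotent that absorbs the lower ones on either side works
for whole families.

Let `col j` be the color of `(a_0, …, a_{m-1})` for `u j`-almost all `a_0`, then `u j`-almost all
`a_1`, and so on. Choose the blocks `b_n` one after another, `u k`-generically, so that each of the
finitely many partially built elements of `TS_j(b)^[m]` gets color `col j` when it is completed
generically. The relations among the `u j` say exactly that a generic next block preserves this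
property.
-/

open Filter

/-! ### Tetris functions -/

/-- The tetris function that jumps by one exactly after the elements of `s`. It maps `{0,…,k}` onto
`{0,…,tetris s k}`, and up to its values beyond `k` every nondecreasing surjection
`{0,…,k} → {0,…,j}` has this form; the `s ⊆ range k` thus enumerate the tetris operations on
`FIN k`. -/
def tetris (s : Finset ℕ) : ℕ →o ℕ where
  toFun := Nat.count (· ∈ s)
  monotone' := Nat.count_monotone _

theorem tetris_zero (s : Finset ℕ) : tetris s 0 = 0 :=
  Nat.count_zero (· ∈ s)

theorem tetris_le (s : Finset ℕ) (k : ℕ) : tetris s k ≤ k :=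
  Nat.count_le (p := (· ∈ s))

theorem tetris_succ (s : Finset ℕ) (k : ℕ) :
    tetris s (k + 1) = tetris s k + if k ∈ s then 1 else 0 :=
  Nat.count_succ _ k

theorem IsTetrisFn.map_zero {k j : ℕ} {f : ℕ → ℕ} (hf : IsTetrisFn k j f) : f 0 = 0 := by
  obtain ⟨hmono, -, hsurj⟩ := hf
  obtain ⟨i, hi, hi0⟩ := hsurj 0 j.zero_le
  exact Nat.le_zero.1 (hi0 ▸ hmono i 0 i.zero_le hi)

theorem IsTetrisFn.map_top {k j : ℕ} {f : ℕ → ℕ} (hf : IsTetrisFn k j f) : f k = j := by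
  obtain ⟨hmono, hle, hsurj⟩ := hf
  obtain ⟨i, hi, rfl⟩ := hsurj j le_rfl
  exact le_antisymm (hle k le_rfl) (hmono k i hi le_rfl)

theorem IsTetrisFn.map_succ_le {k j : ℕ} {f : ℕ → ℕ} (hf : IsTetrisFn k j f) {i : ℕ}
    (hi : i < k) : f (i + 1) ≤ f i + 1 := by
  obtain ⟨hmono, hle, hsurj⟩ := hf
  by_contra! hjump
  obtain ⟨p, hp, hpi⟩ := hsurj (f i + 1) (hjump.le.trans (hle _ hi))
  rcases Nat.lt_or_ge i p with hip | hpi'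
  · have := hmono p (i + 1) hip hp
    omega
  · have := hmono i p hpi' hi.le
    omega

theorem IsTetrisFn.exists_eqOn_tetris {k j : ℕ} {f : ℕ → ℕ} (hf : IsTetrisFn k j f) :
    ∃ s ⊆ Finset.range k, Set.EqOn f (tetris s) (Set.Iic k) := by
  refine ⟨{i ∈ Finset.range k | f i < f (i + 1)}, Finset.filter_subset _ _, fun i hi => ?_⟩
  induction i with
  | zero => rw [hf.map_zero, tetris_zero]
  | succ i ih =>
    have hik : i < k := hi
    have hle := hf.map_succ_le hik
    have hge := hf.1 (i + 1) i i.le_succ hi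
    rw [tetris_succ, ← ih hik.le]
    simp only [Finset.mem_filter, Finset.mem_range, hik, true_and]
    split_ifs <;> omega

/-! ### Coherent families -/

theorem isClosed_setOf_forall_le_eq {X : Type*} [TopologicalSpace X] [T1Space X] (n : ℕ)
    (v : ℕ → X) : IsClosed {w : ℕ → X | ∀ i ≤ n, w i = v i} := by
  simp only [Set.ofPred_forall]
  exact isClosed_iInter fun i => isClosed_iInter fun _ =>
    isClosed_singleton.preimage (continuous_apply i)

section Coherent

variable {S : Type*} [Semigroup S] {φ : Finset ℕ → S →ₙ* S} {F : ℕ → Set S} {v w : ℕ → S} {n : ℕ}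

/-- A right topological semigroup with a closed set `F j` for every level `j`, on which the tetris
functions act by continuous homomorphisms. As for sums of blocks, the level of a product is the
maximum of the levels. -/
structure IsTetrisAction [TopologicalSpace S] (φ : Finset ℕ → S →ₙ* S) (F : ℕ → Set S) : Prop where
  continuous_mul_right : ∀ x : S, Continuous (· * x)
  continuous_map : ∀ s, Continuous (φ s)
  isClosed_level : ∀ j, IsClosed (F j)
  mul_mem : ∀ {i j x y}, x ∈ F i → y ∈ F j → x * y ∈ F (max i j)

/-- A family of elements `v j`, one at each level `F j`, that is compatible with the tetris
functions. -/
structure IsCoherent (φ : Finset ℕ → S →ₙ* S) (F : ℕ → Set S) (v : ℕ → S) : Prop where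
  mem : ∀ j, v j ∈ F j
  map : ∀ s k, φ s (v k) = v (tetris s k)

/-- The relations `v i * v j = v (max i j)` hold up to level `n`. -/
def AbsorbsUpTo (n : ℕ) (v : ℕ → S) : Prop :=
  ∀ i ≤ n, ∀ j ≤ n, v i * v j = v (max i j)

/-- The family of products `v j * v (j - 1) * ⋯ * v 0`. -/
def descProd (v : ℕ → S) : ℕ → S
  | 0 => v 0
  | j + 1 => v (j + 1) * descProd v j

/-- The family of products `v 0 * v 1 * ⋯ * v j`. -/
def ascProd (v : ℕ → S) : ℕ → S
  | 0 => v 0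
  | j + 1 => ascProd v j * v (j + 1)

theorem mul_descProd_self (hidem : ∀ j, v j * v j = v j) (j : ℕ) :
    v j * descProd v j = descProd v j := by
  cases j with
  | zero => exact hidem 0
  | succ j => rw [descProd, ← mul_assoc, hidem]

theorem ascProd_mul_self (hidem : ∀ j, v j * v j = v j) (j : ℕ) :
    ascProd v j * v j = ascProd v j := by
  cases j with
  | zero => exact hidem 0
  | succ j => rw [ascProd, mul_assoc, hidem]

theorem AbsorbsUpTo.congr (hv : AbsorbsUpTo n v) (h : ∀ i ≤ n, w i = v i) : AbsorbsUpTo n w :=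
  fun i hi j hj => by rw [h i hi, h j hj, h _ (max_le hi hj), hv i hi j hj]

theorem AbsorbsUpTo.mul_self (hv : AbsorbsUpTo n v) {i : ℕ} (hi : i ≤ n) : v i * v i = v i := by
  rw [hv i hi i hi, max_self]

theorem AbsorbsUpTo.descProd_eq (hv : AbsorbsUpTo n v) {i : ℕ} (hi : i ≤ n) :
    descProd v i = v i := by
  induction i with
  | zero => rfl
  | succ i ih => rw [descProd, ih (by omega), hv _ hi _ (by omega), max_eq_left i.le_succ]

theorem AbsorbsUpTo.ascProd_eq (hv : AbsorbsUpTo n v) {i : ℕ} (hi : i ≤ n) :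
    ascProd v i = v i := by
  induction i with
  | zero => rfl
  | succ i ih => rw [ascProd, ih (by omega), hv _ (by omega) _ hi, max_eq_right i.le_succ]

theorem AbsorbsUpTo.ascProd_succ (hv : AbsorbsUpTo n v)
    (hidem : v (n + 1) * v (n + 1) = v (n + 1)) (hright : v (n + 1) * v n = v (n + 1)) :
    AbsorbsUpTo (n + 1) (ascProd v) := by
  have hlow : AbsorbsUpTo n (ascProd v) := hv.congr fun i hi => hv.ascProd_eq hi
  have htop : ascProd v (n + 1) = v n * v (n + 1) := by rw [ascProd, hv.ascProd_eq le_rfl]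
  have hright_of_le : ∀ i ≤ n, v (n + 1) * v i = v (n + 1) := fun i hi => by
    rw [← hright, mul_assoc, hv n le_rfl i hi, max_eq_left hi]
  intro i hi j hj
  rcases Nat.le_succ_iff.1 hi with hi | rfl <;> rcases Nat.le_succ_iff.1 hj with hj | rfl
  · exact hlow i hi j hj
  · rw [max_eq_right (by omega), htop, hv.ascProd_eq hi, ← mul_assoc, hv i hi n le_rfl,
      max_eq_right hi]
  · rw [max_eq_left (by omega), htop, hv.ascProd_eq hj, mul_assoc, hright_of_le j hj]
  · rw [max_self, htop, mul_assoc, ← mul_assoc (v (n + 1)), hright, hidem]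

variable [TopologicalSpace S]

theorem IsCoherent.mul (hS : IsTetrisAction φ F) (hv : IsCoherent φ F v) (hw : IsCoherent φ F w) :
    IsCoherent φ F (v * w) where
  mem j := by simpa using hS.mul_mem (hv.mem j) (hw.mem j)
  map s k := by simp only [Pi.mul_apply, map_mul, hv.map, hw.map]

/-- A tetris function maps consecutive levels to equal or consecutive ones, so it turns
`v k * ⋯ * v 0` into a product with the factors `v j, …, v 0` in this order, some of them repeated;
idempotence removes the repetitions. -/
theorem isCoherent_descProd (hS : IsTetrisAction φ F) (hv : IsCoherent φ F v)
    (hidem : ∀ j, v j * v j = v j) : IsCoherent φ F (descProd v) where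
  mem j := by
    induction j with
    | zero => exact hv.mem 0
    | succ j ih => simpa [descProd] using hS.mul_mem (hv.mem (j + 1)) ih
  map s k := by
    induction k with
    | zero => simpa [tetris_zero, descProd] using hv.map s 0
    | succ k ih =>
      rw [descProd, map_mul, ih, hv.map, tetris_succ]
      split_ifs
      · rfl
      · exact mul_descProd_self hidem _

theorem isCoherent_ascProd (hS : IsTetrisAction φ F) (hv : IsCoherent φ F v)
    (hidem : ∀ j, v j * v j = v j) : IsCoherent φ F (ascProd v) where
  mem j := by
    induction j with
    | zero => exact hv.mem 0
    | succ j ih => simpa [ascProd] using hS.mul_mem ih (hv.mem (j + 1))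
  map s k := by
    induction k with
    | zero => simpa [tetris_zero, ascProd] using hv.map s 0
    | succ k ih =>
      rw [ascProd, map_mul, ih, hv.map, tetris_succ]
      split_ifs
      · rfl
      · exact ascProd_mul_self hidem _

variable [T2Space S]

theorem IsTetrisAction.isClosed_setOf_isCoherent (hS : IsTetrisAction φ F) :
    IsClosed {v | IsCoherent φ F v} := by
  have : {v | IsCoherent φ F v} =
      (⋂ j, {v | v j ∈ F j}) ∩ ⋂ s, ⋂ k, {v | φ s (v k) = v (tetris s k)} := by
    ext v
    simp only [Set.mem_inter_iff, Set.mem_iInter, Set.mem_ofPred_eq]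
    exact ⟨fun h => ⟨h.mem, h.map⟩, fun h => ⟨h.1, h.2⟩⟩
  rw [this]
  refine (isClosed_iInter fun j => (hS.isClosed_level j).preimage (continuous_apply j)).inter ?_
  exact isClosed_iInter fun s => isClosed_iInter fun k =>
    isClosed_eq ((hS.continuous_map s).comp (continuous_apply k)) (continuous_apply _)

variable [CompactSpace S]

theorem IsCoherent.exists_idempotent_mem (hS : IsTetrisAction φ F) (hv : IsCoherent φ F v)
    {K : Set (ℕ → S)} (hK : IsClosed K) (hKmul : ∀ x ∈ K, ∀ y ∈ K, x * y ∈ K) (hvK : v ∈ K) :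
    ∃ w ∈ K, IsCoherent φ F w ∧ ∀ j, w j * w j = w j := by
  obtain ⟨w, ⟨hwK, hw⟩, hidem⟩ := exists_idempotent_in_compact_subsemigroup
    (fun r : ℕ → S => continuous_pi fun j =>
      (hS.continuous_mul_right (r j)).comp (continuous_apply j))
    (K ∩ {v | IsCoherent φ F v}) ⟨v, hvK, hv⟩ (hK.inter hS.isClosed_setOf_isCoherent).isCompact
    fun x hx y hy => ⟨hKmul x hx.1 y hy.1, hx.2.mul hS hy.2⟩
  exact ⟨w, hwK, hw, congrFun hidem⟩

/-- Descending products of an idempotent coherent family absorb the lower levels on the right. The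
coherent families that do so at level `n + 1` form a closed semigroup, and the ascending products of
an idempotent in it absorb on the left as well. -/
theorem IsCoherent.exists_absorbsUpTo_succ (hS : IsTetrisAction φ F) (hv : IsCoherent φ F v)
    (habs : AbsorbsUpTo n v) :
    ∃ w, IsCoherent φ F w ∧ AbsorbsUpTo (n + 1) w ∧ ∀ i ≤ n, w i = v i := by
  have hKcl := isClosed_setOf_forall_le_eq n v
  have hKmul : ∀ x : ℕ → S, (∀ i ≤ n, x i = v i) → ∀ y : ℕ → S, (∀ i ≤ n, y i = v i) →
      ∀ i ≤ n, (x * y) i = v i := fun x hx y hy i hi => by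
    rw [Pi.mul_apply, hx i hi, hy i hi, habs.mul_self hi]
  obtain ⟨x, hxv, hx, hxidem⟩ := hv.exists_idempotent_mem hS hKcl hKmul fun _ _ => rfl
  have hxabs : AbsorbsUpTo n x := habs.congr hxv
  have hright : descProd x (n + 1) * v n = descProd x (n + 1) := by
    rw [descProd, hxabs.descProd_eq le_rfl, hxv n le_rfl, mul_assoc, habs.mul_self le_rfl]
  have hRcl : IsClosed {y : ℕ → S | y (n + 1) * v n = y (n + 1)} :=
    isClosed_eq ((hS.continuous_mul_right (v n)).comp (continuous_apply _)) (continuous_apply _)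
  obtain ⟨y, ⟨hyv, hyright⟩, hy, hyidem⟩ := IsCoherent.exists_idempotent_mem hS
    (isCoherent_descProd hS hx hxidem) (hKcl.inter hRcl)
    (fun y hy z hz => ⟨hKmul y hy.1 z hz.1, by
      rw [Set.mem_ofPred_eq, Pi.mul_apply, mul_assoc, hz.2]⟩)
    ⟨fun i hi => (hxabs.descProd_eq hi).trans (hxv i hi), hright⟩
  have hyabs : AbsorbsUpTo n y := habs.congr hyv
  refine ⟨_, isCoherent_ascProd hS hy hyidem, hyabs.ascProd_succ (hyidem _) ?_, fun i hi => ?_⟩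
  · rw [hyv n le_rfl, hyright]
  · rw [hyabs.ascProd_eq hi, hyv i hi]

theorem IsCoherent.exists_absorbing (hS : IsTetrisAction φ F) (hv : IsCoherent φ F v) :
    ∃ u, IsCoherent φ F u ∧ ∀ i j, u i * u j = u (max i j) := by
  obtain ⟨w, -, hw, hidem⟩ := hv.exists_idempotent_mem hS isClosed_univ
    (fun _ _ _ _ => Set.mem_univ _) (Set.mem_univ v)
  have hw0 : AbsorbsUpTo 0 w := fun i hi j hj => by
    rw [Nat.le_zero.1 hi, Nat.le_zero.1 hj, max_self, hidem]
  choose! next hcoh habs hext using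
    fun (x : ℕ → S) (n : ℕ) (h : IsCoherent φ F x ∧ AbsorbsUpTo n x) =>
      h.1.exists_absorbsUpTo_succ hS h.2
  let U : ℕ → ℕ → S := fun n => Nat.rec w (fun n x => next x n) n
  have hU : ∀ n, IsCoherent φ F (U n) ∧ AbsorbsUpTo n (U n) := fun n => by
    induction n with
    | zero => exact ⟨hw, hw0⟩
    | succ n ih => exact ⟨hcoh _ n ih, habs _ n ih⟩
  have hdiag : ∀ {i n}, i ≤ n → U n i = U i i := fun {i n} hin => by
    induction n, hin using Nat.le_induction with
    | base => rfl
    | succ n hin ih => exact (hext _ n (hU n) i hin).trans ih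
  refine ⟨fun i => U i i, ⟨fun j => (hU j).1.mem j, fun s k => ?_⟩, fun i j => ?_⟩
  · rw [(hU k).1.map, hdiag (tetris_le s k)]
  · change U i i * U j j = _
    rw [← hdiag (le_max_left i j), ← hdiag (le_max_right i j)]
    exact (hU _).2 i (le_max_left i j) j (le_max_right i j)

end Coherent

/-! ### Blocks -/

/-- The functions `ℕ → ℕ` under pointwise maximum. This is the pointwise sum when the supports are
disjoint but, unlike the sum, it is preserved by monotone maps and defined without restriction. -/
def Block : Type := ℕ → ℕ

namespace Block

@[ext] theorem ext {a b : Block} (h : ∀ i, a i = b i) : a = b := funext h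

instance : CommMonoid Block where
  mul a b i := max (a i) (b i)
  one _ := 0
  mul_assoc _ _ _ := ext fun _ => max_assoc _ _ _
  mul_comm _ _ := ext fun _ => max_comm _ _
  one_mul _ := ext fun _ => Nat.zero_max _
  mul_one _ := ext fun _ => Nat.max_zero _

theorem mul_apply (a b : Block) (i : ℕ) : (a * b) i = max (a i) (b i) := rfl

/-- The operation `b ↦ f ∘ b`. -/
def comp (f : ℕ →o ℕ) : Block →ₙ* Block where
  toFun b i := f (b i)
  map_mul' _ _ := ext fun _ => f.monotone.map_max

theorem comp_apply (f : ℕ →o ℕ) (b : Block) (i : ℕ) : comp f b i = f (b i) := rfl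

theorem mul_mem_FIN {a b : Block} {i j : ℕ} (ha : a ∈ FIN i) (hb : b ∈ FIN j) :
    a * b ∈ FIN (max i j) := by
  obtain ⟨hai, hafin, p, hp⟩ := ha
  obtain ⟨hbj, hbfin, q, hq⟩ := hb
  refine ⟨fun n => max_le_max (hai n) (hbj n), (hafin.union hbfin).subset fun n hn => ?_, ?_⟩
  · contrapose! hn
    simpa [mul_apply] using hn
  · rcases le_total i j with hij | hji
    · exact ⟨q, by rw [mul_apply, hq, max_eq_right hij, max_eq_right ((hai q).trans hij)]⟩
    · exact ⟨p, by rw [mul_apply, hp, max_eq_left hji, max_eq_left ((hbj p).trans hji)]⟩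

/-- The block `j · 1_{n}`. -/
def single (j n : ℕ) : Block := fun i => if i = n then j else 0

theorem single_apply (j n i : ℕ) : single j n i = if i = n then j else 0 := rfl

theorem single_mem_FIN (j n : ℕ) : single j n ∈ FIN j := by
  refine ⟨fun i => ?_, (Set.finite_singleton n).subset fun i hi => ?_, n, if_pos rfl⟩
  · rw [single_apply]
    split_ifs <;> omega
  · exact of_not_not fun hin => hi (if_neg hin)

theorem comp_tetris_single (s : Finset ℕ) (j n : ℕ) :
    comp (tetris s) (single j n) = single (tetris s j) n := by
  ext i
  rw [comp_apply, single_apply, single_apply]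
  split_ifs
  · rfl
  · exact tetris_zero s

theorem eq_one_of_mem_FIN_zero {b : Block} (hb : b ∈ FIN 0) : b = 1 :=
  ext fun i => Nat.le_zero.1 (hb.1 i)

theorem prod_apply_eq_sum {ι : Type*} (t : Finset ι) {a : ι → Block}
    (ha : (t : Set ι).Pairwise fun i i' => ∀ p, a i p = 0 ∨ a i' p = 0) (p : ℕ) :
    (∏ i ∈ t, a i) p = ∑ i ∈ t, a i p := by
  classical
  induction t using Finset.induction_on with
  | empty => rfl
  | insert i t hi ih =>
    rw [Finset.prod_insert hi, Finset.sum_insert hi, mul_apply,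
      ih (ha.mono (Finset.coe_subset.2 (Finset.subset_insert i t)))]
    by_cases hip : a i p = 0
    · simp [hip]
    · have hsum : ∑ i' ∈ t, a i' p = 0 := Finset.sum_eq_zero fun i' hi' =>
        (ha (Finset.mem_insert_self i t) (Finset.mem_insert_of_mem hi')
          (fun h => hi (h ▸ hi')) p).resolve_left hip
      simp [hsum]

end Block

/-! ### Generic blocks -/

attribute [local instance] Ultrafilter.semigroup

/-- The homomorphism between semigroups of ultrafilters induced by a homomorphism. -/
def ultrafilterMap {M N : Type*} [Semigroup M] [Semigroup N] (f : M →ₙ* N) :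
    Ultrafilter M →ₙ* Ultrafilter N where
  toFun := Ultrafilter.map f
  map_mul' U V := Ultrafilter.coe_inj.1 <| Filter.ext' fun p => by
    simp only [Ultrafilter.coe_map, eventually_map, Ultrafilter.eventually_mul, map_mul]

theorem continuous_ultrafilter_map {α β : Type*} (f : α → β) :
    Continuous (Ultrafilter.map f) :=
  ultrafilterBasis_is_basis.continuous_iff.2 <| Set.forall_mem_range.2 fun s =>
    ultrafilter_isOpen_basic (f ⁻¹' s)

/-- The ultrafilters on `FIN j` that contain every tail `{b | n ≤ min Supp b}`. -/
def genericAt (j : ℕ) : Set (Ultrafilter Block) :=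
  {U | (∀ᶠ b : Block in U, b ∈ FIN j) ∧ ∀ n, ∀ᶠ b : Block in U, ∀ i < n, b i = 0}

theorem isClosed_genericAt (j : ℕ) : IsClosed (genericAt j) := by
  simp only [genericAt, Set.ofPred_and, Set.ofPred_forall]
  exact (ultrafilter_isClosed_basic _).inter <| isClosed_iInter fun n =>
    ultrafilter_isClosed_basic {b : Block | ∀ i < n, b i = 0}

theorem mul_mem_genericAt {i j : ℕ} {U V : Ultrafilter Block} (hU : U ∈ genericAt i)
    (hV : V ∈ genericAt j) : U * V ∈ genericAt (max i j) := by
  refine ⟨(Ultrafilter.eventually_mul _ _ _).2 ?_,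
    fun n => (Ultrafilter.eventually_mul _ _ _).2 ?_⟩
  · filter_upwards [hU.1] with a ha
    filter_upwards [hV.1] with b hb using Block.mul_mem_FIN ha hb
  · filter_upwards [hU.2 n] with a ha
    filter_upwards [hV.2 n] with b hb i hi
    rw [Block.mul_apply, ha i hi, hb i hi, max_self]

theorem isTetrisAction_ultrafilterMap :
    IsTetrisAction (fun s => ultrafilterMap (Block.comp (tetris s))) genericAt where
  continuous_mul_right := Ultrafilter.continuous_mul_left
  continuous_map _ := continuous_ultrafilter_map _
  isClosed_level := isClosed_genericAt
  mul_mem := mul_mem_genericAt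

theorem isCoherent_map_single :
    IsCoherent (fun s => ultrafilterMap (Block.comp (tetris s))) genericAt
      fun j => (hyperfilter ℕ).map (Block.single j) where
  mem j := by
    refine ⟨?_, fun n => ?_⟩
    · exact Eventually.of_forall (f := (hyperfilter ℕ : Filter ℕ)) (Block.single_mem_FIN j)
    · have hn : ∀ᶠ p in (hyperfilter ℕ : Filter ℕ), n ≤ p :=
        Nat.hyperfilter_le_atTop (eventually_ge_atTop n)
      exact hn.mono fun p hp i hi => if_neg (by omega)
  map s k := by
    change ((hyperfilter ℕ).map (Block.single k)).map (Block.comp (tetris s)) = _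
    rw [Ultrafilter.map_map]
    congr 1
    exact funext (Block.comp_tetris_single s k)

/-- A family of ultrafilters `u j` of generic blocks of level `j` that absorb one another and are
mapped to one another by the tetris operations. -/
structure IsGenericFamily (u : ℕ → Ultrafilter Block) : Prop where
  mem : ∀ j, u j ∈ genericAt j
  map : ∀ s k, (u k).map (Block.comp (tetris s)) = u (tetris s k)
  mul : ∀ i j, u i * u j = u (max i j)

theorem exists_isGenericFamily : ∃ u, IsGenericFamily u := by
  obtain ⟨u, hu, hmul⟩ := isCoherent_map_single.exists_absorbing isTetrisAction_ultrafilterMap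
  exact ⟨u, hu.mem, hu.map, hmul⟩

section GenericFamily

variable {u : ℕ → Ultrafilter Block} (hu : IsGenericFamily u)
include hu

theorem IsGenericFamily.eventually_zero {p : Block → Prop} : (∀ᶠ b in u 0, p b) ↔ p 1 := by
  have hone : ∀ᶠ b in u 0, b = (1 : Block) :=
    (hu.mem 0).1.mono fun _ => Block.eq_one_of_mem_FIN_zero
  have hconst : (∀ᶠ b in u 0, p b) ↔ ∀ᶠ _ : Block in u 0, p 1 :=
    eventually_congr (hone.mono fun b hb => by rw [hb])
  rw [hconst, eventually_const]

theorem IsGenericFamily.eventually_max {i j : ℕ} {p : Block → Prop} :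
    (∀ᶠ b in u (max i j), p b) ↔ ∀ᶠ a in u i, ∀ᶠ b in u j, p (a * b) := by
  rw [← hu.mul, Ultrafilter.eventually_mul]

theorem IsGenericFamily.eventually_tetris {s : Finset ℕ} {k : ℕ} {p : Block → Prop} :
    (∀ᶠ b in u (tetris s k), p b) ↔ ∀ᶠ b in u k, p (Block.comp (tetris s) b) := by
  rw [← hu.map, Ultrafilter.coe_map, eventually_map]

theorem IsGenericFamily.eventually_suppLT {j : ℕ} {a : Block} (ha : a ∈ FIN j) (k : ℕ) :
    ∀ᶠ b : Block in u k, SuppLT a b := by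
  obtain ⟨n, hn⟩ := ha.2.1.bddAbove
  filter_upwards [(hu.mem k).2 (n + 1)] with b hb p hp q hq
  have hpn : p ≤ n := hn hp
  have hnq : ¬q < n + 1 := fun h => hq (hb q h)
  omega

end GenericFamily

/-! ### Generic lists -/

/-- The generic list of length `r`: its first entry is chosen generically for `U`, then the second
one, and so on. -/
def genericList {α : Type*} (U : Ultrafilter α) : ℕ → Ultrafilter (List α)
  | 0 => pure []
  | r + 1 => U.bind fun a => (genericList U r).map (a :: ·)

theorem eventually_genericList_zero {α : Type*} {U : Ultrafilter α} {p : List α → Prop} :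
    (∀ᶠ l in genericList U 0, p l) ↔ p [] := Iff.rfl

theorem eventually_genericList_succ {α : Type*} {U : Ultrafilter α} {r : ℕ} {p : List α → Prop} :
    (∀ᶠ l in genericList U (r + 1), p l) ↔ ∀ᶠ a in U, ∀ᶠ l in genericList U r, p (a :: l) := Iff.rfl

theorem exists_eventually_eq_of_lt {α : Type*} (U : Ultrafilter α) {f : α → ℕ} {r : ℕ}
    (hf : ∀ x, f x < r) : ∃ i, ∀ᶠ x in U, f x = i := by
  have h : ∀ᶠ x in U, ∃ i ∈ Set.Iio r, f x = i := .of_forall fun x => ⟨f x, hf x, rfl⟩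
  obtain ⟨i, -, hi⟩ := (Ultrafilter.eventually_exists_mem_iff (Set.finite_Iio r)).1 h
  exact ⟨i, hi⟩

/-! ### Partially built tuples -/

/-- A partially built element of `TS_target(b)^[m]`: the entries `done` are complete, `cur` is the
part of the next entry that is built so far, `level` is the maximum of the levels of its summands,
and `rest` is the number of entries after it. -/
structure PartialTuple where
  target : ℕ
  rest : ℕ
  done : List Block
  cur : Block
  level : ℕ

namespace PartialTuple

/-- Add to the current entry the image of the block `b ∈ FIN k` under `tetris s`. -/
def add (k : ℕ) (p : PartialTuple) (b : Block) (s : Finset ℕ) : PartialTuple where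
  target := p.target
  rest := p.rest
  done := p.done
  cur := p.cur * Block.comp (tetris s) b
  level := max p.level (tetris s k)

/-- Complete the current entry and start the next one. -/
def close (p : PartialTuple) : PartialTuple where
  target := p.target
  rest := p.rest - 1
  done := p.done ++ [p.cur]
  cur := 1
  level := 0

/-- The partial tuples obtained from `p` by adding an image of `b` to the current entry and then
possibly starting the next entry. -/
def next (k : ℕ) (b : Block) (p : PartialTuple) : Set PartialTuple :=
  p.add k b '' (Finset.range k).powerset ∪
    close '' {q ∈ p.add k b '' (Finset.range k).powerset | q.level = q.target ∧ 0 < q.rest}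

theorem finite_next (k : ℕ) (b : Block) (p : PartialTuple) : (p.next k b).Finite :=
  have hadd := (Finset.finite_toSet (Finset.range k).powerset).image (p.add k b)
  hadd.union ((hadd.sep _).image _)

theorem add_mem_next {k : ℕ} {s : Finset ℕ} (hs : s ⊆ Finset.range k) (p : PartialTuple)
    (b : Block) : p.add k b s ∈ p.next k b :=
  .inl ⟨s, Finset.mem_powerset.2 hs, rfl⟩

theorem close_add_mem_next {k : ℕ} {s : Finset ℕ} (hs : s ⊆ Finset.range k) {p : PartialTuple}
    {b : Block} (hlevel : (p.add k b s).level = p.target) (hrest : 0 < p.rest) :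
    (p.add k b s).close ∈ p.next k b :=
  .inr ⟨_, ⟨⟨s, Finset.mem_powerset.2 hs, rfl⟩, hlevel, hrest⟩, rfl⟩

/-- Every generic completion of `p` satisfies `P p.target`: here `z` ranges over the generic blocks
that raise the level of the current entry to the target. -/
def GenericallySatisfies (u : ℕ → Ultrafilter Block) (P : ℕ → List Block → Prop)
    (p : PartialTuple) : Prop :=
  ∀ l, max p.level l = p.target → ∀ᶠ z in u l, ∀ᶠ t in genericList (u p.target) p.rest,
    P p.target (p.done ++ p.cur * z :: t)

namespace GenericallySatisfies

variable {u : ℕ → Ultrafilter Block} (hu : IsGenericFamily u) {P : ℕ → List Block → Prop}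
  {p : PartialTuple}
include hu

/-- The generic block of level `0` is `1`, so an entry that has reached its target level may be left
as it is. -/
theorem eventually_genericList (hp : p.GenericallySatisfies u P) (hlevel : p.level = p.target) :
    ∀ᶠ t in genericList (u p.target) p.rest, P p.target (p.done ++ p.cur :: t) := by
  simpa using hu.eventually_zero.1 (hp 0 (by rw [hlevel, Nat.max_zero]))

theorem close (hp : p.GenericallySatisfies u P) (hlevel : p.level = p.target)
    (hrest : 0 < p.rest) : p.close.GenericallySatisfies u P := by
  intro l hl
  obtain rfl : l = p.target := (Nat.zero_max l).symm.trans hl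
  obtain ⟨r, hr⟩ := Nat.exists_eq_add_one.2 hrest
  have h := hp.eventually_genericList hu hlevel
  rw [hr, eventually_genericList_succ] at h
  simpa [PartialTuple.close, hr] using h

/-- If `b` is generic of level `k` and `z` of level `l`, then `tetris s b * z` is generic of level
`max (tetris s k) l`. -/
theorem eventually_add (hp : p.GenericallySatisfies u P) (k : ℕ) (s : Finset ℕ) :
    ∀ᶠ b in u k, (p.add k b s).GenericallySatisfies u P := by
  have hfin : {l | max (max p.level (tetris s k)) l = p.target}.Finite :=
    (Set.finite_Iic p.target).subset fun l hl => (le_max_right _ l).trans_eq hl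
  refine (eventually_all_finite hfin).2 fun l hl => ?_
  have h := hp (max (tetris s k) l) ((max_assoc _ _ _).symm.trans hl)
  simpa only [add, mul_assoc] using hu.eventually_tetris.1 (hu.eventually_max.1 h)

theorem eventually_next (hp : p.GenericallySatisfies u P) (k : ℕ) :
    ∀ᶠ b in u k, ∀ q ∈ p.next k b, q.GenericallySatisfies u P := by
  have h := (eventually_all_finset (Finset.range k).powerset).2 fun s _ => hp.eventually_add hu k s
  filter_upwards [h] with b hb
  rintro q (⟨s, hs, rfl⟩ | ⟨-, ⟨⟨s, hs, rfl⟩, hlevel, hrest⟩, rfl⟩)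
  · exact hb s hs
  · exact (hb s hs).close hu hlevel hrest

end GenericallySatisfies

/-- The partial tuples that can be built from the blocks in the list `l`. -/
def reachable (k m : ℕ) (l : List Block) : Set PartialTuple :=
  l.foldl (fun S b => ⋃ p ∈ S, p.next k b) ((fun j => ⟨j, m - 1, [], 1, 0⟩) '' Set.Iic k)

theorem reachable_append (k m : ℕ) (l : List Block) (b : Block) :
    reachable k m (l ++ [b]) = ⋃ p ∈ reachable k m l, p.next k b := by
  simp [reachable]

theorem finite_reachable (k m : ℕ) (l : List Block) : (reachable k m l).Finite := by
  induction l using List.reverseRecOn with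
  | nil => exact (Set.finite_Iic k).image _
  | append_singleton l b ih =>
    rw [reachable_append]
    exact ih.biUnion fun p _ => p.finite_next k b

end PartialTuple

/-! ### Elements of `TS_j(b)^[m]` -/

/-- The entry `f_i ∘ b_i + ⋯ + f_{j-1} ∘ b_{j-1}` for the tetris functions `f_l = tetris (s l)`. -/
def tetrisProd (b : ℕ → Block) (s : ℕ → Finset ℕ) (i j : ℕ) : Block :=
  ∏ l ∈ Finset.Ico i j, Block.comp (tetris (s l)) (b l)

/-- The level of `tetrisProd b s i j` when the `b l` are in `FIN k`. -/
def tetrisLevel (k : ℕ) (s : ℕ → Finset ℕ) (i j : ℕ) : ℕ :=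
  (Finset.Ico i j).sup fun l => tetris (s l) k

theorem tetrisProd_self (b : ℕ → Block) (s : ℕ → Finset ℕ) (i : ℕ) : tetrisProd b s i i = 1 := by
  simp [tetrisProd]

theorem tetrisLevel_self (k : ℕ) (s : ℕ → Finset ℕ) (i : ℕ) : tetrisLevel k s i i = 0 := by
  simp [tetrisLevel]

theorem tetrisProd_succ (b : ℕ → Block) (s : ℕ → Finset ℕ) {i j : ℕ} (hij : i ≤ j) :
    tetrisProd b s i (j + 1) = tetrisProd b s i j * Block.comp (tetris (s j)) (b j) :=
  Finset.prod_Ico_succ_top hij _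

theorem tetrisLevel_succ (k : ℕ) (s : ℕ → Finset ℕ) {i j : ℕ} (hij : i ≤ j) :
    tetrisLevel k s i (j + 1) = max (tetrisLevel k s i j) (tetris (s j) k) := by
  rw [tetrisLevel, ← Finset.insert_Ico_right_eq_Ico_add_one hij, Finset.sup_insert, max_comm]
  rfl

theorem tetrisProd_eq_sum {k : ℕ} {b : ℕ → Block} (hbk : ∀ i, b i ∈ FIN k)
    (hb : ∀ {i i'}, i < i' → SuppLT (b i) (b i')) {s : ℕ → Finset ℕ} {f : ℕ → ℕ → ℕ} {i j : ℕ}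
    (hf : ∀ l ∈ Finset.Ico i j, Set.EqOn (f l) (tetris (s l)) (Set.Iic k)) :
    tetrisProd b s i j = ∑ l ∈ Finset.Ico i j, f l ∘ b l := by
  funext p
  rw [Finset.sum_apply, tetrisProd, Block.prod_apply_eq_sum]
  · exact Finset.sum_congr rfl fun l hl => (hf l hl ((hbk l).1 p)).symm
  · intro l _ l' _ hne p
    have hzero : b l p = 0 ∨ b l' p = 0 := by
      by_contra! h
      rcases hne.lt_or_gt with hlt | hlt
      · exact (hb hlt p h.1 p h.2).false
      · exact (hb hlt p h.2 p h.1).false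
    exact hzero.imp (fun h => by rw [Block.comp_apply, h, tetris_zero])
      fun h => by rw [Block.comp_apply, h, tetris_zero]

/-- The data of a sum in `TS_j(b)^[m]`: cut points `0 = n 0 < ⋯ < n m` and tetris functions, given
by their jump sets `s i`, such that every interval `[n d, n (d + 1))` has level `j`. -/
structure IsTetrisScheme (k j m : ℕ) (n : ℕ → ℕ) (s : ℕ → Finset ℕ) : Prop where
  zero : n 0 = 0
  lt : ∀ d < m, n d < n (d + 1)
  subset : ∀ i, s i ⊆ Finset.range k
  level : ∀ d < m, tetrisLevel k s (n d) (n (d + 1)) = j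

theorem exists_isTetrisScheme {k j m : ℕ} {b : ℕ → Block} (hbk : ∀ i, b i ∈ FIN k)
    (hb : ∀ {i i'}, i < i' → SuppLT (b i) (b i')) {a : Fin m → Block} (ha : a ∈ TSm k j m b) :
    ∃ n s, IsTetrisScheme k j m n s ∧ ∀ d : Fin m, a d = tetrisProd b s (n d) (n (d + 1)) := by
  obtain ⟨-, n, js, fs, hn0, hn, hfs, ha⟩ := ha
  have hnm : ∀ d < m, ∀ i ∈ Finset.Ico (n d) (n (d + 1)), i < n m := fun d hd i hi =>
    (Finset.mem_Ico.1 hi).2.trans_le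
      ((strictMonoOn_Iic_of_lt_succ hn).monotoneOn hd Set.self_mem_Iic hd)
  have hs : ∀ i, ∃ s ⊆ Finset.range k, i < n m → Set.EqOn (fs i) (tetris s) (Set.Iic k) := by
    intro i
    by_cases hi : i < n m
    · obtain ⟨s, hs, heq⟩ := (hfs i hi).2.exists_eqOn_tetris
      exact ⟨s, hs, fun _ => heq⟩
    · exact ⟨∅, Finset.empty_subset _, fun h => absurd h hi⟩
  choose s hsk hfs_eq using hs
  have hjs : ∀ i < n m, tetris (s i) k = js i := fun i hi => by
    rw [← hfs_eq i hi (le_refl k), (hfs i hi).2.map_top]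
  refine ⟨n, s, ⟨hn0, hn, hsk, fun d hd => ?_⟩, fun d => ?_⟩
  · obtain ⟨hle, ⟨i, hi, hi', hij⟩, -⟩ := ha ⟨d, hd⟩
    refine le_antisymm (Finset.sup_le fun i hi => ?_) ?_
    · obtain ⟨hi₁, hi₂⟩ := Finset.mem_Ico.1 hi
      exact (hjs i (hnm d hd i hi)).trans_le (hle i hi₁ hi₂)
    · have hmem := Finset.mem_Ico.2 ⟨hi, hi'⟩
      rw [← hij, ← hjs i (hnm d hd i hmem)]
      exact Finset.le_sup (f := fun l => tetris (s l) k) hmem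
  · exact (ha d).2.2.trans
      (tetrisProd_eq_sum hbk hb fun i hi => hfs_eq i (hnm d d.2 i hi)).symm

/-- The part of the sum given by a scheme that involves only the blocks `b i` with `i < t`, where
`t` lies in the interval of the `d`-th entry. -/
def partialAt (k j m : ℕ) (b : ℕ → Block) (n : ℕ → ℕ) (s : ℕ → Finset ℕ) (d t : ℕ) :
    PartialTuple where
  target := j
  rest := m - (d + 1)
  done := (List.range d).map fun e => tetrisProd b s (n e) (n (e + 1))
  cur := tetrisProd b s (n d) t
  level := tetrisLevel k s (n d) t

theorem partialAt_succ_right (k j m : ℕ) (b : ℕ → Block) {n : ℕ → ℕ} (s : ℕ → Finset ℕ) {d t : ℕ}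
    (ht : n d ≤ t) :
    partialAt k j m b n s d (t + 1) = (partialAt k j m b n s d t).add k (b t) (s t) := by
  simp only [partialAt, PartialTuple.add, tetrisProd_succ b s ht, tetrisLevel_succ k s ht]

theorem partialAt_succ_left (k j m : ℕ) (b : ℕ → Block) (n : ℕ → ℕ) (s : ℕ → Finset ℕ) (d : ℕ) :
    partialAt k j m b n s (d + 1) (n (d + 1)) = (partialAt k j m b n s d (n (d + 1))).close := by
  simp only [partialAt, PartialTuple.close, tetrisProd_self, tetrisLevel_self, List.range_succ,
    List.map_append, List.map_singleton, Nat.sub_sub]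

theorem IsTetrisScheme.partialAt_mem_reachable {k j m : ℕ} {n : ℕ → ℕ} {s : ℕ → Finset ℕ}
    (h : IsTetrisScheme k j m n s) (hj : j ≤ k) (b : ℕ → Block) {d t : ℕ} (hd : d < m)
    (hdt : n d ≤ t) (htd : t ≤ n (d + 1)) :
    partialAt k j m b n s d t ∈ PartialTuple.reachable k m ((List.range t).map b) := by
  induction t generalizing d with
  | zero =>
    cases d with
    | zero => exact ⟨j, hj, by simp [partialAt, h.zero, tetrisProd_self, tetrisLevel_self]⟩
    | succ e => exact absurd (h.lt e (by omega)) (by omega)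
  | succ t ih =>
    rw [List.range_succ, List.map_append, List.map_singleton, PartialTuple.reachable_append,
      Set.mem_iUnion₂]
    rcases hdt.lt_or_eq with hlt | heq
    · have ht := Nat.le_of_lt_succ hlt
      refine ⟨_, ih hd ht (by omega), ?_⟩
      rw [partialAt_succ_right k j m b s ht]
      exact PartialTuple.add_mem_next (h.subset t) _ _
    · obtain ⟨e, rfl⟩ : ∃ e, d = e + 1 :=
        Nat.exists_eq_succ_of_ne_zero fun hd0 => by simp [hd0, h.zero] at heq
      have het : n e ≤ t := by have := h.lt e (by omega); omega
      refine ⟨_, ih (by omega) het (by omega), ?_⟩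
      have hlevel := h.level e (by omega)
      rw [← heq, partialAt_succ_left, heq, partialAt_succ_right k j m b s het]
      rw [heq] at hlevel
      exact PartialTuple.close_add_mem_next (h.subset t)
        ((tetrisLevel_succ k s het).symm.trans hlevel) (Nat.sub_pos_of_lt hd)

/-! ### The generic block sequence -/

theorem exists_seq_forall_map_range {α : Type*} {Good : List α → Prop} (hnil : Good [])
    (hstep : ∀ l, Good l → ∃ a, Good (l ++ [a])) :
    ∃ b : ℕ → α, ∀ n, Good ((List.range n).map b) := by
  have : Nonempty α := ⟨(hstep [] hnil).choose⟩
  choose! next hnext using hstep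
  let pre : ℕ → List α := fun n => Nat.rec [] (fun _ l => l ++ [next l]) n
  have hpre : ∀ n, pre n = (List.range n).map fun i => next (pre i) := fun n => by
    induction n with
    | zero => rfl
    | succ n ih => rw [List.range_succ, List.map_append, ← ih]; rfl
  have hgood : ∀ n, Good (pre n) := fun n => by
    induction n with
    | zero => exact hnil
    | succ n ih => exact hnext _ ih
  exact ⟨fun i => next (pre i), fun n => hpre n ▸ hgood n⟩

/-- `l` is a finite block sequence in `FIN k` such that every partial tuple of length `m` that can
be built from it satisfies `P` when completed generically. -/
structure IsGenericPrefix (u : ℕ → Ultrafilter Block) (P : ℕ → List Block → Prop) (k m : ℕ)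
    (l : List Block) : Prop where
  mem : ∀ b ∈ l, b ∈ FIN k
  pairwise : l.Pairwise (fun a b : Block => SuppLT a b)
  reachable : ∀ p ∈ PartialTuple.reachable k m l, p.GenericallySatisfies u P

section GenericSequence

variable {u : ℕ → Ultrafilter Block} {P : ℕ → List Block → Prop} {k m : ℕ}

theorem isGenericPrefix_nil (hm : 0 < m) (hP : ∀ j ≤ k, ∀ᶠ t in genericList (u j) m, P j t) :
    IsGenericPrefix u P k m [] where
  mem := by simp
  pairwise := .nil
  reachable := by
    rintro _ ⟨j, hj, rfl⟩ l hl
    obtain rfl : l = j := (Nat.zero_max l).symm.trans hl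
    have h := hP l hj
    rw [← Nat.sub_add_cancel hm, eventually_genericList_succ] at h
    simpa using h

theorem IsGenericPrefix.exists_append (hu : IsGenericFamily u) {l : List Block}
    (hl : IsGenericPrefix u P k m l) :
    ∃ b, IsGenericPrefix u P k m (l ++ [b]) := by
  have hsupp : ∀ᶠ b : Block in u k, ∀ a ∈ {a | a ∈ l}, SuppLT a b :=
    (eventually_all_finite l.finite_toSet).2 fun a ha => hu.eventually_suppLT (hl.mem a ha) k
  have hreach := (eventually_all_finite (PartialTuple.finite_reachable k m l)).2
    fun p hp => (hl.reachable p hp).eventually_next hu k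
  obtain ⟨b, hbk, hbl, hb⟩ := ((hu.mem k).1.and (hsupp.and hreach)).exists
  refine ⟨b, ?_, ?_, fun q hq => ?_⟩
  · simpa [or_imp, forall_and] using ⟨hl.mem, hbk⟩
  · exact List.pairwise_append.2 ⟨hl.pairwise, List.pairwise_singleton _ b,
      fun a ha c hc => List.mem_singleton.1 hc ▸ hbl a ha⟩
  · rw [PartialTuple.reachable_append] at hq
    obtain ⟨p, hp, hq⟩ := Set.mem_iUnion₂.1 hq
    exact hb p hp q hq

/-- A sequence of blocks all of whose finite initial segments are generic. -/
def IsGenericSeq (u : ℕ → Ultrafilter Block) (P : ℕ → List Block → Prop) (k m : ℕ)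
    (b : ℕ → Block) : Prop :=
  ∀ n, IsGenericPrefix u P k m ((List.range n).map b)

theorem exists_isGenericSeq (hu : IsGenericFamily u) (hm : 0 < m)
    (hP : ∀ j ≤ k, ∀ᶠ t in genericList (u j) m, P j t) : ∃ b, IsGenericSeq u P k m b :=
  exists_seq_forall_map_range (isGenericPrefix_nil hm hP) fun _ hl => hl.exists_append hu

theorem IsGenericSeq.mem_FIN {b : ℕ → Block} (hb : IsGenericSeq u P k m b) (i : ℕ) :
    b i ∈ FIN k :=
  (hb (i + 1)).mem _ (List.mem_map.2 ⟨i, by simp, rfl⟩)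

theorem IsGenericSeq.suppLT {b : ℕ → Block} (hb : IsGenericSeq u P k m b) {i i' : ℕ}
    (h : i < i') : SuppLT (b i) (b i') := by
  have hpair := (hb (i' + 1)).pairwise
  rw [List.range_succ, List.map_append, List.pairwise_append] at hpair
  exact hpair.2.2 _ (List.mem_map.2 ⟨i, by simpa using h, rfl⟩) _ (by simp)

theorem IsGenericSeq.satisfies_of_mem_TSm (hu : IsGenericFamily u) {b : ℕ → Block}
    (hb : IsGenericSeq u P k m b) (hm : 0 < m) {j : ℕ} (hj : j ≤ k) {a : Fin m → Block}
    (ha : a ∈ TSm k j m b) : P j (List.ofFn a) := by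
  obtain ⟨n, s, h, ha⟩ := exists_isTetrisScheme hb.mem_FIN hb.suppLT ha
  obtain ⟨d, rfl⟩ := Nat.exists_eq_add_one.2 hm
  have hlast := (hb _).reachable _
    (h.partialAt_mem_reachable hj b d.lt_succ_self (h.lt d d.lt_succ_self).le le_rfl)
  have hP := hlast.eventually_genericList hu (h.level d d.lt_succ_self)
  simp only [partialAt, Nat.sub_self, eventually_genericList_zero] at hP
  have hofFn : List.ofFn a = (List.range (d + 1)).map fun e => tetrisProd b s (n e) (n (e + 1)) :=
    List.ext_getElem (by simp) fun i hi _ => by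
      simpa [-List.ofFn_succ] using ha ⟨i, by simpa using hi⟩
  rwa [hofFn, List.range_succ, List.map_append, List.map_singleton]

end GenericSequence

/-- The multidimensional Gowers theorem for generalized tetris operations: for every
finite coloring of `FIN_{≤k}^[m]` there is an infinite block sequence in `FIN k` such that
`TS_j(b_n)^[m]` is monochromatic for every `j = 1,…,k`. -/
theorem gowers_generalized_tetris_multidim (m k : ℕ) (hm : 1 ≤ m) (hk : 1 ≤ k)
    (r : ℕ) (c : (Fin m → ℕ → ℕ) → ℕ)
    (hc : ∀ t : Fin m → ℕ → ℕ, (∃ j, 1 ≤ j ∧ j ≤ k ∧ IsBlockTuple j m t) → c t < r) :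
    ∃ b : ℕ → ℕ → ℕ, IsBlockSeq k b ∧
      ∀ j, 1 ≤ j → j ≤ k → ∀ a ∈ TSm k j m b, ∀ a' ∈ TSm k j m b, c a = c a' := by
  obtain ⟨u, hu⟩ := exists_isGenericFamily
  -- `c` need not be bounded outside the block tuples.
  let c' : List Block → ℕ := fun l => min (c fun d => l.getD d 1) r
  choose col hcol using fun j => exists_eventually_eq_of_lt (genericList (u j) m) (f := c')
    fun l => Nat.lt_succ_of_le (min_le_right _ r)
  obtain ⟨b, hb⟩ := exists_isGenericSeq (P := fun j l => c' l = col j) hu hm fun j _ => hcol j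
  have hcolor : ∀ j, 1 ≤ j → j ≤ k → ∀ a : Fin m → Block, a ∈ TSm k j m b → c a = col j := by
    intro j hj hjk a ha
    have hc' : c' (List.ofFn a) = c a := by
      have hofFn : (fun d : Fin m => (List.ofFn a).getD d 1) = a := by ext; simp
      exact (congrArg (fun x => min (c x) r) hofFn).trans
        (min_eq_left (hc a ⟨j, hj, hjk, ha.1⟩).le)
    exact hc'.symm.trans (hb.satisfies_of_mem_TSm hu hm hjk ha)
  exact ⟨b, ⟨hb.mem_FIN, fun n => hb.suppLT n.lt_succ_self⟩, fun j hj hjk a ha a' ha' =>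
    (hcolor j hj hjk a ha).trans (hcolor j hj hjk a' ha').symm⟩
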